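/- The operators ρ^{(3)}(r^{ij}, r^{kl}, r^{mn}) = P^{ijklmn;}_{pq}{}^r z^p z^q ∂/∂z^r on ℂ[z¹,…,z⁵], where P is the 𝔰𝔩(5)-equivariant projector Λ³(Λ²L) → (2001) written out explicitly as (1/2)(z^{[i}ε^{j]klp[m}z^{n]} − z^{[i}ε^{j]mnp[k}z^{l]} + z^{[k}ε^{l]mnp[i}z^{j]} − z^{[k}ε^{l]ijp[m}z^{n]} + z^{[m}ε^{n]ijp[k}z^{l]} − z^{[m}ε^{n]klp[i}z^{j]}) ∂/∂z^p, satisfy the coherence relation [∂/∂z^i, ρ^{(3)}(r^{jk}, r^{lm}, r^{np})] = P^{jklmnp;}_i{}^r_q (z^q ∂/∂z^r-part), i.e. equal the operator ρ^{(1)} applied to μ₄(e_i, r^{jk}, r^{lm}, r^{np}) where μ₄ is the 4-bracket of the extended holomorphic symmetry algebra. -/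

import Mathlib

open scoped BigOperators
open MvPolynomial

/-- The Levi-Civita symbol `ε^{ijklm}` on five indices. -/
noncomputable def eps5 (f : Fin 5 → Fin 5) : ℂ :=
  if h : Function.Bijective f then ((Equiv.Perm.sign (Equiv.ofBijective f h) : ℤ) : ℂ) else 0

/-- `ρ^{(1)}(r̃^a_b) = z^a ∂/∂z^b − (1/5) δ^a_b z^k ∂/∂z^k`. -/
noncomputable def rho1 (a b : Fin 5) (f : MvPolynomial (Fin 5) ℂ) :
    MvPolynomial (Fin 5) ℂ :=
  X a * pderiv b f - (5 : ℂ)⁻¹ • (if a = b then ∑ k, X k * pderiv k f else 0)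

/-- The building block `z^{[i}ε^{j]klp[m}z^{n]} ∂/∂z^p` (antisymmetrized over `(i,j)` and
`(m,n)`, unnormalized). -/
noncomputable def zBlock (i j k l m n : Fin 5) (f : MvPolynomial (Fin 5) ℂ) :
    MvPolynomial (Fin 5) ℂ :=
  ∑ p, (C (eps5 ![j, k, l, p, m]) * X i * X n - C (eps5 ![i, k, l, p, m]) * X j * X n
      - C (eps5 ![j, k, l, p, n]) * X i * X m + C (eps5 ![i, k, l, p, n]) * X j * X m)
    * pderiv p f

/-- `ρ^{(3)}(r^{ij}, r^{kl}, r^{mn})` as an operator on `ℂ[z¹,…,z⁵]`. -/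
noncomputable def rho3 (i j k l m n : Fin 5) (f : MvPolynomial (Fin 5) ℂ) :
    MvPolynomial (Fin 5) ℂ :=
  (2 : ℂ)⁻¹ • (zBlock i j k l m n f - zBlock i j m n k l f + zBlock k l m n i j f
    - zBlock k l i j m n f + zBlock m n i j k l f - zBlock m n k l i j f)

/-- The building block `δ_i^{[j}ε^{k]lmqr}δ^{[n}_q ρ^{(1)}(r̃^{p]}_r)` (unnormalized
antisymmetrizations, internal indices `q, r` summed). -/
noncomputable def muBlock (i j k l m n p : Fin 5) (f : MvPolynomial (Fin 5) ℂ) :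
    MvPolynomial (Fin 5) ℂ :=
  ∑ q, ∑ r,
    ((if i = j then (1 : ℂ) else 0) * eps5 ![k, l, m, q, r]
      - (if i = k then (1 : ℂ) else 0) * eps5 ![j, l, m, q, r]) •
    ((if n = q then (1 : ℂ) else 0) • rho1 p r f - (if p = q then (1 : ℂ) else 0) • rho1 n r f)

/-- `ρ^{(1)}(μ₄(e_i, r^{jk}, r^{lm}, r^{np}))` as an operator on `ℂ[z¹,…,z⁵]`. -/
noncomputable def rho1mu4 (i j k l m n p : Fin 5) (f : MvPolynomial (Fin 5) ℂ) :
    MvPolynomial (Fin 5) ℂ :=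
  - muBlock i j k l m n p f + muBlock i j k n p l m f - muBlock i l m n p j k f
    + muBlock i l m j k n p f - muBlock i n p j k l m f + muBlock i n p l m j k f

lemma eps5_swap (f : Fin 5 → Fin 5) (a b : Fin 5) (hab : a ≠ b) :
    eps5 (f ∘ Equiv.swap a b) = - eps5 f := by
  unfold eps5
  by_cases h : Function.Bijective f
  · have h' : Function.Bijective (f ∘ Equiv.swap a b) := h.comp (Equiv.swap a b).bijective
    rw [dif_pos h, dif_pos h']
    have e : Equiv.ofBijective (f ∘ Equiv.swap a b) h' =
        Equiv.ofBijective f h * Equiv.swap a b := by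
      ext x; rfl
    rw [e, Equiv.Perm.sign_mul, Equiv.Perm.sign_swap hab]
    push_cast
    ring
  · have h' : ¬ Function.Bijective (f ∘ Equiv.swap a b) := fun h' => h (by
      have := h'.comp (Equiv.swap a b).bijective
      rwa [Function.comp_assoc, ← Equiv.coe_trans, Equiv.swap_swap, Equiv.coe_refl,
        Function.comp_id] at this)
    rw [dif_neg h, dif_neg h', neg_zero]

lemma eps5_last (a b c d e : Fin 5) : eps5 ![a, b, c, e, d] = - eps5 ![a, b, c, d, e] := by
  rw [← eps5_swap _ 3 4 (by decide)]
  congr 1; funext x; fin_cases x <;> rfl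

lemma eps5_outer (a b c d e : Fin 5) : eps5 ![d, b, c, a, e] = - eps5 ![a, b, c, d, e] := by
  rw [← eps5_swap _ 0 3 (by decide)]
  congr 1; funext x; fin_cases x <;> rfl

lemma eps5_pairs (a b c d e : Fin 5) : eps5 ![a, d, e, b, c] = eps5 ![a, b, c, d, e] := by
  rw [← neg_neg (eps5 ![a, b, c, d, e]), ← eps5_swap _ 1 3 (by decide),
    ← eps5_swap _ 2 4 (by decide)]
  congr 1; funext x; fin_cases x <;> rfl

/-- The vector field `ε^{abcdr} ∂/∂z^r`. -/
noncomputable def epsD (a b c d : Fin 5) (f : MvPolynomial (Fin 5) ℂ) :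
    MvPolynomial (Fin 5) ℂ := ∑ r, C (eps5 ![a, b, c, d, r]) * pderiv r f

lemma epsD_outer (a b c d : Fin 5) (f : MvPolynomial (Fin 5) ℂ) :
    epsD d b c a f = - epsD a b c d f := by
  simp [epsD, eps5_outer a b c d]

lemma pderiv_comm (a b : Fin 5) (f : MvPolynomial (Fin 5) ℂ) :
    pderiv a (pderiv b f) = pderiv b (pderiv a f) := by
  have h : ⁅(pderiv a : Derivation ℂ (MvPolynomial (Fin 5) ℂ) (MvPolynomial (Fin 5) ℂ)),
      (pderiv b : Derivation ℂ (MvPolynomial (Fin 5) ℂ) (MvPolynomial (Fin 5) ℂ))⁆ = 0 := by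
    apply derivation_ext
    intro x
    rw [Derivation.commutator_apply, pderiv_X, pderiv_X, Pi.single_apply, Pi.single_apply]
    split_ifs <;> simp
  have h' := congrArg (fun D => D f) h
  simp only [Derivation.commutator_apply, Derivation.zero_apply] at h'
  exact sub_eq_zero.mp h'

lemma pderiv_epsD (x a b c d : Fin 5) (f : MvPolynomial (Fin 5) ℂ) :
    pderiv x (epsD a b c d f) = epsD a b c d (pderiv x f) := by
  simp only [epsD, map_sum, pderiv_C_mul]
  refine Finset.sum_congr rfl fun r _ => ?_
  rw [pderiv_comm]

lemma zBlock_eq (i j k l m n : Fin 5) (f : MvPolynomial (Fin 5) ℂ) :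
    zBlock i j k l m n f = - (epsD j k l m f * X i * X n - epsD i k l m f * X j * X n
      - epsD j k l n f * X i * X m + epsD i k l n f * X j * X m) := by
  simp only [zBlock, epsD, Finset.sum_mul, ← Finset.sum_sub_distrib, ← Finset.sum_add_distrib,
    ← Finset.sum_neg_distrib]
  refine Finset.sum_congr rfl fun r _ => ?_
  rw [eps5_last j k l m r, eps5_last i k l m r, eps5_last j k l n r, eps5_last i k l n r]
  simp only [C_neg]
  ring

/-- The Kronecker delta as a constant polynomial. -/
noncomputable def dl (i j : Fin 5) : MvPolynomial (Fin 5) ℂ := if i = j then 1 else 0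

lemma pderiv_X_dl (i j : Fin 5) : pderiv i (X j : MvPolynomial (Fin 5) ℂ) = dl i j := by
  rw [pderiv_X, dl, Pi.single_apply]
  simp only [eq_comm]

lemma sum_rho1 (a b c d p : Fin 5) (f : MvPolynomial (Fin 5) ℂ) :
    ∑ r, C (eps5 ![a, b, c, d, r]) * rho1 p r f = epsD a b c d f * X p
      - C (5 : ℂ)⁻¹ * C (eps5 ![a, b, c, d, p]) * ∑ k, X k * pderiv k f := by
  have h : ∀ E : MvPolynomial (Fin 5) ℂ,
      ∑ r, C (eps5 ![a, b, c, d, r]) * ((5 : ℂ)⁻¹ • (if p = r then E else 0)) =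
        C (5 : ℂ)⁻¹ * C (eps5 ![a, b, c, d, p]) * E := by
    intro E
    rw [Finset.sum_eq_single p]
    · rw [if_pos rfl, smul_eq_C_mul, mul_left_comm, mul_assoc]
    · intro r _ hr
      rw [if_neg hr.symm, smul_zero, mul_zero]
    · intro hp
      exact absurd (Finset.mem_univ p) hp
  simp only [rho1, mul_sub, Finset.sum_sub_distrib]
  rw [h]
  simp only [epsD, Finset.sum_mul]
  have h' : ∀ r, C (eps5 ![a, b, c, d, r]) * (X p * pderiv r f) =
      C (eps5 ![a, b, c, d, r]) * pderiv r f * X p := fun r => by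
    rw [mul_assoc, mul_comm (X p)]
  simp only [h']

lemma muBlock_eq (i j k l m n p : Fin 5) (f : MvPolynomial (Fin 5) ℂ) :
    muBlock i j k l m n p f =
      dl i j * (epsD k l m n f * X p - epsD k l m p f * X n
        - 2 * C (5 : ℂ)⁻¹ * C (eps5 ![k, l, m, n, p]) * ∑ k, X k * pderiv k f)
      - dl i k * (epsD j l m n f * X p - epsD j l m p f * X n
        - 2 * C (5 : ℂ)⁻¹ * C (eps5 ![j, l, m, n, p]) * ∑ k, X k * pderiv k f) := by
  have key : muBlock i j k l m n p f =
      dl i j * (∑ r, C (eps5 ![k, l, m, n, r]) * rho1 p r f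
          - ∑ r, C (eps5 ![k, l, m, p, r]) * rho1 n r f)
      - dl i k * (∑ r, C (eps5 ![j, l, m, n, r]) * rho1 p r f
          - ∑ r, C (eps5 ![j, l, m, p, r]) * rho1 n r f) := by
    have hd : ∀ a b : Fin 5, C (if a = b then (1 : ℂ) else 0) = dl a b := by
      intro a b; unfold dl; split_ifs <;> simp
    have hs : ∀ (a : Fin 5) (g : Fin 5 → MvPolynomial (Fin 5) ℂ), ∑ q, dl a q * g q = g a := by
      intro a g; simp [dl]
    rw [← hs n fun q => ∑ r, C (eps5 ![k, l, m, q, r]) * rho1 p r f,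
      ← hs p fun q => ∑ r, C (eps5 ![k, l, m, q, r]) * rho1 n r f,
      ← hs n fun q => ∑ r, C (eps5 ![j, l, m, q, r]) * rho1 p r f,
      ← hs p fun q => ∑ r, C (eps5 ![j, l, m, q, r]) * rho1 n r f]
    simp only [muBlock, smul_eq_C_mul, C_sub, C_mul, hd, Finset.mul_sum,
      ← Finset.sum_sub_distrib]
    refine Finset.sum_congr rfl fun q _ => Finset.sum_congr rfl fun r _ => ?_
    ring
  rw [key, sum_rho1, sum_rho1, sum_rho1, sum_rho1, eps5_last k l m n p, eps5_last j l m n p]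
  simp only [C_neg]
  ring

/-- The operators `ρ^{(3)}` satisfy the coherence relation
`[∂/∂z^i, ρ^{(3)}(r^{jk}, r^{lm}, r^{np})] = ρ^{(1)}(μ₄(e_i, r^{jk}, r^{lm}, r^{np}))`. -/
theorem rho3_coherence_with_mu4 :
    ∀ (i j k l m n p : Fin 5) (f : MvPolynomial (Fin 5) ℂ),
      pderiv i (rho3 j k l m n p f) - rho3 j k l m n p (pderiv i f) =
        rho1mu4 i j k l m n p f := by
  intro i j k l m n p f
  have h2 : (C (2 : ℂ)⁻¹ : MvPolynomial (Fin 5) ℂ) * 2 = 1 := by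
    rw [show (2 : MvPolynomial (Fin 5) ℂ) = C 2 from (map_ofNat C 2).symm, ← C_mul]
    norm_num
  have half : ∀ A B : MvPolynomial (Fin 5) ℂ, A = 2 * B → C (2 : ℂ)⁻¹ * A = B := by
    intro A B h
    rw [h, ← mul_assoc, h2, one_mul]
  simp only [rho3, smul_eq_C_mul, pderiv_C_mul, ← mul_sub]
  apply half
  simp only [rho1mu4, muBlock_eq, zBlock_eq, map_sub, map_add, map_neg, Derivation.leibniz,
    smul_eq_mul, pderiv_epsD, pderiv_X_dl]
  rw [eps5_pairs k l m n p, eps5_pairs j l m n p, eps5_pairs m j k n p, eps5_pairs l j k n p,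
    eps5_pairs p j k l m, eps5_pairs n j k l m]
  simp only [epsD_outer j l m n, epsD_outer j l m p, epsD_outer k l m n, epsD_outer k l m p,
    epsD_outer j n p l, epsD_outer j n p m, epsD_outer k n p l, epsD_outer k n p m,
    epsD_outer l j k n, epsD_outer l j k p, epsD_outer m j k n, epsD_outer m j k p]
  ring
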